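/- arXiv:1005.3624 — 9 statements merged into one kernel-verified Lean document; each statement's English description precedes it below -/
import Mathlib

section
/- For all integers n > m > 0, the polynomial X^{gcd(n,m)} - 1 divides X^n + X^m - 2 in ℚ[X], and the quotient polynomial (X^n + X^m - 2)/(X^{gcd(n,m)} - 1) is irreducible over ℚ. -/
/-!
The quotient is irreducible because all its complex roots lie strictly outside the closed unit
disc while its constant term is `2`. Write `f = X ^ n + X ^ m - 2` and `d = gcd n m`. A root `z` of
`f` with `‖z‖ ≤ 1` forces `z ^ n = z ^ m = 1` by the equality case of the triangle inequality, hence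
`z ^ d = 1`; and such a root is simple, since the derivative of `f` at `z`, times `z`, is
`n + m ≠ 0`. So the integral quotient `g = f / (X ^ d - 1)` has no root in the closed unit disc.
A monic nonconstant integral factor of
`g` then has a constant term of absolute value at least `2`, up to sign the product of its roots,
and two such factors would give `|g(0)| ≥ 4`. The Gauss lemma passes from `ℤ` to `ℚ`.
-/

open Polynomial

lemma eq_one_of_norm_le_one_of_add_eq_two {u v : ℂ} (hu : ‖u‖ ≤ 1) (hv : ‖v‖ ≤ 1)
    (h : u + v = 2) : u = 1 := by
  have h1 : u.re ≤ 1 := (Complex.re_le_norm u).trans hu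
  have h2 : v.re ≤ 1 := (Complex.re_le_norm v).trans hv
  have h3 : u.re + v.re = 2 := by simpa using congrArg Complex.re h
  have hre : u.re = 1 := by linarith
  have h4 : u.re * u.re + u.im * u.im ≤ 1 := by
    rw [← Complex.normSq_apply, Complex.normSq_eq_norm_sq]
    exact pow_le_one₀ (norm_nonneg _) hu
  have him : u.im = 0 := by
    rw [hre] at h4
    nlinarith [mul_self_nonneg u.im]
  exact Complex.ext hre him

/-- The constant term is, up to sign, the product of the complex roots, hence an integer of absolute
value greater than `1`. -/
lemma two_le_abs_coeff_zero {a : ℤ[X]} (ha : a.Monic) (hdeg : a.natDegree ≠ 0)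
    (hroots : ∀ z : ℂ, aeval z a = 0 → 1 < ‖z‖) : 2 ≤ |a.coeff 0| := by
  have hmon : (a.map (Int.castRingHom ℂ)).Monic := ha.map _
  have hsplit : (a.map (Int.castRingHom ℂ)).Splits := IsAlgClosed.splits _
  have hcoeff := hsplit.coeff_zero_eq_prod_roots_of_monic hmon
  have hne : (a.map (Int.castRingHom ℂ)).roots ≠ 0 := by
    intro h0
    have := hsplit.natDegree_eq_card_roots
    rw [h0, ha.natDegree_map] at this
    exact hdeg (by simpa using this)
  have key : ∀ s : Multiset ℂ, (∀ z ∈ s, 1 < ‖z‖) → s ≠ 0 → 1 < ‖s.prod‖ := by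
    intro s
    induction s using Multiset.induction_on with
    | empty => intro _ h; exact absurd rfl h
    | cons z s ih =>
      intro hs _
      have hz := hs z (Multiset.mem_cons_self z s)
      rw [Multiset.prod_cons, norm_mul]
      by_cases h0 : s = 0
      · simpa [h0] using hz
      · have := ih (fun w hw => hs w (Multiset.mem_cons_of_mem hw)) h0
        nlinarith
  have hprod := key _ (fun z hz => hroots z (by
    have := (mem_roots'.mp hz).2
    rwa [IsRoot.def, eval_map, ← algebraMap_int_eq, ← aeval_def] at this)) hne
  have h1 : (1 : ℝ) < |(a.coeff 0 : ℝ)| := by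
    have h2 := congrArg norm hcoeff
    rw [coeff_map, norm_mul, norm_pow, norm_neg, norm_one, one_pow, one_mul] at h2
    rw [← h2] at hprod
    simpa using hprod
  have h3 : 1 < |a.coeff 0| := by exact_mod_cast h1
  omega

/-- Roots of `X ^ n + X ^ m - 2` in the closed unit disc are simple roots of `X ^ gcd n m - 1`,
so dividing by the latter removes all of them. -/
lemma one_lt_norm_of_root_quotient {n m : ℕ} (hn : 0 < n) (hm : 0 < m) {g : ℤ[X]}
    (hg : (X : ℤ[X]) ^ n + X ^ m - 2 = (X ^ Nat.gcd n m - 1) * g) {z : ℂ}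
    (hz : aeval z g = 0) : 1 < ‖z‖ := by
  by_contra! hle
  have hf : z ^ n + z ^ m = 2 := by
    have := congrArg (aeval z) hg
    simp only [map_mul, hz, mul_zero, map_sub, map_add, map_pow, aeval_X, map_ofNat] at this
    exact sub_eq_zero.mp this
  have hu : ‖z ^ n‖ ≤ 1 := by rw [norm_pow]; exact pow_le_one₀ (norm_nonneg _) hle
  have hv : ‖z ^ m‖ ≤ 1 := by rw [norm_pow]; exact pow_le_one₀ (norm_nonneg _) hle
  have hzn := eq_one_of_norm_le_one_of_add_eq_two hu hv hf
  have hzm := eq_one_of_norm_le_one_of_add_eq_two hv hu (by rw [add_comm]; exact hf)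
  have hzd : z ^ Nat.gcd n m = 1 := pow_gcd_eq_one.mpr ⟨hzn, hzm⟩
  -- The derivative of `(X ^ d - 1) * g` vanishes at the common root `z` of both factors.
  have hd := congrArg (fun p => aeval z (derivative p)) hg
  simp only [derivative_mul, map_add, map_mul, hz, mul_zero, map_sub, map_pow, aeval_X, hzd,
    map_one, sub_self, zero_mul, add_zero, derivative_X_pow, derivative_ofNat, sub_zero] at hd
  have e1 : z * z ^ (n - 1) = 1 := by rw [mul_pow_sub_one hn.ne', hzn]
  have e2 : z * z ^ (m - 1) = 1 := by rw [mul_pow_sub_one hm.ne', hzm]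
  have hsum : ((n + m : ℕ) : ℂ) = 0 := by
    simp at hd
    push_cast
    linear_combination z * hd - n * e1 - m * e2
  have := Nat.cast_eq_zero.mp hsum
  omega

/-- For all integers `n > m > 0`, the polynomial `X^(gcd n m) - 1` divides
`X^n + X^m - 2` in `ℚ[X]`, and the quotient is irreducible over `ℚ`. -/
theorem trinomial_add_div_cyclotomic_irreducible (n m : ℕ) (hmn : m < n) (hm : 0 < m) :
    ((X : ℚ[X]) ^ Nat.gcd n m - 1) ∣ (X ^ n + X ^ m - 2) ∧
      Irreducible (((X : ℚ[X]) ^ n + X ^ m - 2) / (X ^ Nat.gcd n m - 1)) := by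
  have hn : 0 < n := hm.trans hmn
  have hd0 : Nat.gcd n m ≠ 0 := (Nat.gcd_pos_of_pos_right n hm).ne'
  have hdm : Nat.gcd n m ≤ m := Nat.gcd_le_right n hm
  have hpow : ∀ k, Nat.gcd n m ∣ k → ((X : ℤ[X]) ^ Nat.gcd n m - 1) ∣ X ^ k - 1 := by
    rintro k ⟨c, rfl⟩
    rw [pow_mul]
    exact sub_one_dvd_pow_sub_one _ c
  obtain ⟨g, hg⟩ : ((X : ℤ[X]) ^ Nat.gcd n m - 1) ∣ X ^ n + X ^ m - 2 := by
    have h := dvd_add (hpow n (Nat.gcd_dvd_left n m)) (hpow m (Nat.gcd_dvd_right n m))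
    have e : (X : ℤ[X]) ^ n + X ^ m - 2 = (X ^ n - 1) + (X ^ m - 1) := by ring
    rwa [e]
  have hdmon : ((X : ℤ[X]) ^ Nat.gcd n m - 1).Monic := monic_X_pow_sub_C 1 hd0
  have hlow : ((X : ℤ[X]) ^ m - 2).degree < n := by
    refine lt_of_le_of_lt (b := (m : WithBot ℕ)) ?_ (by exact_mod_cast hmn)
    exact (degree_X_pow_sub_C hm (2 : ℤ)).le
  have hf : (X : ℤ[X]) ^ n + X ^ m - 2 = X ^ n + (X ^ m - 2) := by ring
  have hfmon : ((X : ℤ[X]) ^ n + X ^ m - 2).Monic := by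
    rw [hf]; exact monic_X_pow_add hlow
  have hfdeg : ((X : ℤ[X]) ^ n + X ^ m - 2).natDegree = n := by
    rw [hf]
    apply natDegree_eq_of_degree_eq_some
    rw [degree_add_eq_left_of_degree_lt (by rwa [degree_X_pow]), degree_X_pow]
  have hgmon : g.Monic := hdmon.of_mul_monic_left (hg ▸ hfmon)
  have hgdeg : g.natDegree ≠ 0 := by
    have h := congrArg natDegree hg
    have e : ((X : ℤ[X]) ^ Nat.gcd n m - 1).natDegree = Nat.gcd n m := natDegree_X_pow_sub_C (r := 1)
    rw [hfdeg, hdmon.natDegree_mul hgmon, e] at h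
    omega
  have hg0 : g.coeff 0 = 2 := by
    have h := congrArg (eval 0) hg
    simp [hd0, hn.ne', hm.ne'] at h
    rw [coeff_zero_eq_eval_zero]
    omega
  have hgne : g ≠ 1 := by
    rintro rfl
    exact hgdeg natDegree_one
  have hirr : Irreducible g := by
    rw [hgmon.irreducible_iff_natDegree]
    refine ⟨hgne, fun a b ha hb hab => ?_⟩
    by_contra! hcon
    have h2a := two_le_abs_coeff_zero ha hcon.1 fun z hz =>
      one_lt_norm_of_root_quotient hn hm hg (by rw [← hab, map_mul, hz, zero_mul])
    have h2b := two_le_abs_coeff_zero hb hcon.2 fun z hz =>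
      one_lt_norm_of_root_quotient hn hm hg (by rw [← hab, map_mul, hz, mul_zero])
    have h4 : |a.coeff 0| * |b.coeff 0| = 2 := by
      rw [← abs_mul, ← mul_coeff_zero, hab, hg0]; rfl
    nlinarith
  have hgQ : (X : ℚ[X]) ^ n + X ^ m - 2 =
      (X ^ Nat.gcd n m - 1) * g.map (algebraMap ℤ ℚ) := by
    simpa using congrArg (Polynomial.map (algebraMap ℤ ℚ)) hg
  have hne : (X : ℚ[X]) ^ Nat.gcd n m - 1 ≠ 0 := (monic_X_pow_sub_C (1 : ℚ) hd0).ne_zero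
  refine ⟨⟨_, hgQ⟩, ?_⟩
  rw [hgQ, mul_div_cancel_left₀ _ hne]
  exact (hgmon.irreducible_iff_irreducible_map_fraction_map).mp hirr
end

section
/- Let n > m > 0 be integers and let f, g ∈ ℤ[X] satisfy f·g = X^n + X^m - 2 and |f(0)| = 1. Then f divides X^{gcd(n,m)} - 1 in ℚ[X]. -/
/-!
The complex roots of `X ^ n + X ^ m - 2` all satisfy `1 ≤ ‖z‖`, because `‖z ^ n + z ^ m‖ < 2` inside
the open unit disc. The factor `f` has leading and constant coefficients `± 1`, so the moduli of its
roots multiply to `1`, and every root of `f` lies on the unit circle. There `z ^ n + z ^ m = 2`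
forces `z ^ n = z ^ m = 1` (`eq_one_of_add_eq_two`), that is, `z ^ gcd n m = 1`. Such a root is
simple, as `z` times the derivative of the trinomial takes the value `n + m ≠ 0` there. Hence `f`
divides `X ^ gcd n m - 1` over `ℂ`, and divisibility descends to `ℚ`.
-/

open Polynomial

/-- The number `2` is a sum of two points of the closed unit disc only as `1 + 1`. -/
lemma eq_one_of_add_eq_two {a b : ℂ} (ha : ‖a‖ ≤ 1) (hb : ‖b‖ ≤ 1) (h : a + b = 2) : a = 1 := by
  have h1 := (Complex.re_le_norm a).trans ha
  have h2 := (Complex.re_le_norm b).trans hb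
  have h3 : a.re + b.re = 2 := by simpa using congrArg Complex.re h
  have hre : a.re = 1 := by linarith
  have h4 : a.re * a.re + a.im * a.im ≤ 1 := by
    rw [← Complex.normSq_apply, Complex.normSq_eq_norm_sq]
    exact pow_le_one₀ (norm_nonneg _) ha
  have him : a.im = 0 := by
    rw [hre] at h4
    nlinarith [sq_nonneg a.im]
  exact Complex.ext (by simpa using hre) (by simpa using him)

lemma one_le_norm_of_root {n m : ℕ} (hn : n ≠ 0) (hm : m ≠ 0) {z : ℂ} (h : z ^ n + z ^ m = 2) :
    1 ≤ ‖z‖ := by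
  by_contra! hz
  have h1 : ‖z‖ ^ n < 1 := pow_lt_one₀ (norm_nonneg _) hz hn
  have h2 : ‖z‖ ^ m < 1 := pow_lt_one₀ (norm_nonneg _) hz hm
  have h3 := norm_add_le (z ^ n) (z ^ m)
  rw [h, norm_pow, norm_pow] at h3
  norm_num at h3
  linarith

lemma multiset_one_le_norm_prod (s : Multiset ℂ) (h : ∀ z ∈ s, 1 ≤ ‖z‖) : 1 ≤ ‖s.prod‖ := by
  induction s using Multiset.induction_on with
  | empty => simp
  | cons a s ih =>
    rw [Multiset.prod_cons, norm_mul]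
    exact one_le_mul_of_one_le_of_one_le (h a (Multiset.mem_cons_self a s))
      (ih fun z hz => h z (Multiset.mem_cons_of_mem hz))

lemma multiset_norm_eq_one (s : Multiset ℂ) (h : ∀ z ∈ s, 1 ≤ ‖z‖) (hs : ‖s.prod‖ = 1) :
    ∀ z ∈ s, ‖z‖ = 1 := by
  intro z hz
  obtain ⟨t, rfl⟩ := Multiset.exists_cons_of_mem hz
  have h1 := multiset_one_le_norm_prod t fun w hw => h w (Multiset.mem_cons_of_mem hw)
  have h2 := h z hz
  rw [Multiset.prod_cons, norm_mul] at hs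
  nlinarith

lemma trinomial_leadingCoeff {n m : ℕ} (hmn : m < n) (hm : 0 < m) :
    (X ^ n + X ^ m - 2 : ℤ[X]).leadingCoeff = 1 := by
  have h : (X ^ n + X ^ m - 2 : ℤ[X]) = X ^ n + (X ^ m - C 2) := by
    simp [add_sub_assoc]
  rw [h]
  apply monic_X_pow_add
  rw [degree_X_pow_sub_C hm]
  exact_mod_cast hmn

/-- If `n > m > 0` and `f, g ∈ ℤ[X]` satisfy `f * g = X^n + X^m - 2` with
`|f(0)| = 1`, then `f` divides `X^(gcd n m) - 1` in `ℚ[X]`. -/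
theorem factor_of_trinomial_add_divides_cyclotomic (n m : ℕ) (hmn : m < n) (hm : 0 < m)
    (f g : ℤ[X]) (hfg : f * g = X ^ n + X ^ m - 2) (hf0 : |f.coeff 0| = 1) :
    f.map (Int.castRingHom ℚ) ∣ ((X : ℚ[X]) ^ Nat.gcd n m - 1) := by
  have hn : 0 < n := hm.trans hmn
  have hlc : |f.leadingCoeff| = 1 := by
    have h := trinomial_leadingCoeff hmn hm
    rw [← hfg, leadingCoeff_mul] at h
    exact Int.isUnit_iff_abs_eq.mp (IsUnit.of_mul_eq_one _ h)
  have hinj : Function.Injective (Int.castRingHom ℂ) := Int.cast_injective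
  have hf : f ≠ 0 := by
    rintro rfl
    simp at hf0
  set F : ℂ[X] := f.map (Int.castRingHom ℂ) with hFdef
  set G : ℂ[X] := g.map (Int.castRingHom ℂ) with hGdef
  have hF : F ≠ 0 := (Polynomial.map_ne_zero_iff hinj).mpr hf
  have hFG : F * G = X ^ n + X ^ m - 2 := by
    rw [hFdef, hGdef, ← Polynomial.map_mul, hfg]
    simp
  have hsplit : F.Splits := IsAlgClosed.splits F
  have hroot : ∀ z ∈ F.roots, z ^ n + z ^ m = 2 := by
    intro z hz
    have h := congrArg (eval z) hFG
    rw [eval_mul, (isRoot_of_mem_roots hz).eq_zero, zero_mul] at h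
    simp only [eval_sub, eval_add, eval_pow, eval_X, eval_ofNat] at h
    linear_combination -h
  have hprod : ‖F.roots.prod‖ = 1 := by
    have h := congrArg norm hsplit.coeff_zero_eq_leadingCoeff_mul_prod_roots
    have hF0 : ‖F.coeff 0‖ = 1 := by
      rw [hFdef, coeff_map, eq_intCast, Complex.norm_intCast]
      exact_mod_cast hf0
    have hFl : ‖F.leadingCoeff‖ = 1 := by
      rw [hFdef, leadingCoeff_map_of_injective hinj, eq_intCast, Complex.norm_intCast]
      exact_mod_cast hlc
    simpa [hF0, hFl] using h.symm
  have hnorm := multiset_norm_eq_one F.roots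
    (fun z hz => one_le_norm_of_root hn.ne' hm.ne' (hroot z hz)) hprod
  have hpow : ∀ z ∈ F.roots, z ^ n = 1 ∧ z ^ m = 1 := by
    intro z hz
    have ha : ‖z ^ n‖ ≤ 1 := by simp [hnorm z hz]
    have hb : ‖z ^ m‖ ≤ 1 := by simp [hnorm z hz]
    exact ⟨eq_one_of_add_eq_two ha hb (hroot z hz),
      eq_one_of_add_eq_two hb ha (by rw [add_comm]; exact hroot z hz)⟩
  have hnodup : F.roots.Nodup := by
    rw [Multiset.nodup_iff_count_le_one]
    intro z
    rw [count_roots]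
    by_contra! hz
    obtain ⟨h0, h1⟩ := (one_lt_rootMultiplicity_iff_isRoot hF).mp hz
    obtain ⟨hzn, hzm⟩ := hpow z ((mem_roots hF).mpr h0)
    -- A double root of `F` kills the derivative of `F * G`.
    have hder := congrArg (fun p => eval z (derivative p)) hFG
    simp only [derivative_mul, eval_add, eval_mul, h0.eq_zero, h1.eq_zero] at hder
    simp only [derivative_sub, derivative_add, derivative_X_pow, derivative_ofNat,
      eval_add, eval_mul, eval_C, eval_pow, eval_X, zero_mul, add_zero,
      sub_zero] at hder
    have e1 : z ^ (n - 1) * z = 1 := by rw [pow_sub_one_mul hn.ne', hzn]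
    have e2 : z ^ (m - 1) * z = 1 := by rw [pow_sub_one_mul hm.ne', hzm]
    have hsum : (n : ℂ) + m = 0 := by
      linear_combination (-z) * hder - (n : ℂ) * e1 - (m : ℂ) * e2
    have : n + m = 0 := by exact_mod_cast hsum
    omega
  have hd : 0 < Nat.gcd n m := Nat.gcd_pos_of_pos_left m hn
  have hQ : (X ^ Nat.gcd n m - 1 : ℂ[X]) ≠ 0 := (monic_X_pow_sub_C 1 hd.ne').ne_zero
  have hdvd : F ∣ X ^ Nat.gcd n m - 1 := by
    refine hsplit.dvd_of_roots_le_roots hF ((Multiset.le_iff_subset hnodup).mpr fun z hz => ?_)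
    obtain ⟨hzn, hzm⟩ := hpow z hz
    rw [mem_roots hQ]
    simp [IsRoot, pow_gcd_eq_one.mpr ⟨hzn, hzm⟩]
  rw [← Polynomial.map_dvd_map' (algebraMap ℚ ℂ), Polynomial.map_map]
  have hcomp : (algebraMap ℚ ℂ).comp (Int.castRingHom ℚ) = Int.castRingHom ℂ := RingHom.ext_int _ _
  rw [hcomp]
  simpa using hdvd
end

section
/- Let a < b < c < d be natural numbers. Then F_a + F_c = 2·F_b and F_b + F_d = 2·F_c hold simultaneously (i.e. (F_a, F_b, F_c, F_d) is a four-term arithmetic progression) if and only if (a,b,c,d) = (0,1,3,4) or (a,b,c,d) = (0,2,3,4). -/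
/-!
The second equation forces `d = c + 1`: otherwise
`F d ≥ F (c + 2) = F c + F (c + 1) ≥ 2 * F c`, while `F b > 0`. Hence
`F b = 2 * F c - F (c + 1) = F (c - 2)`. If `b = c - 2`, the first equation reads
`F a + F (b + 1) = F b`, so `F a = 0` and `F b = F (b + 1)`, giving `(0, 1, 3, 4)`. Otherwise
`{b, c - 2} = {1, 2}`, as this is the only coincidence `F m = F n` with `m ≠ n`, and the first
equation leaves only `(0, 2, 3, 4)`.
-/

/-- Among positive indices, `F 1 = F 2` is the only failure of strict monotonicity of `F`. -/
lemma fib_lt_fib_of_lt {m n : ℕ} (hm : 1 ≤ m) (hmn : m < n) (hn : n ≠ 2) :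
    Nat.fib m < Nat.fib n := by
  rcases Nat.lt_or_ge m 2 with h | h
  · obtain rfl : m = 1 := by omega
    exact (Nat.fib_lt_fib (m := 2) le_rfl).2 (by omega)
  · exact (Nat.fib_lt_fib h).2 hmn

/-- For natural numbers `a < b < c < d`, `(F a, F b, F c, F d)` is a four-term
arithmetic progression if and only if `(a,b,c,d) = (0,1,3,4)` or `(0,2,3,4)`. -/
theorem fib_four_term_ap_classification (a b c d : ℕ) (hab : a < b) (hbc : b < c) (hcd : c < d) :
    (Nat.fib a + Nat.fib c = 2 * Nat.fib b ∧ Nat.fib b + Nat.fib d = 2 * Nat.fib c) ↔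
      (a = 0 ∧ b = 1 ∧ c = 3 ∧ d = 4) ∨ (a = 0 ∧ b = 2 ∧ c = 3 ∧ d = 4) := by
  constructor
  · rintro ⟨h1, h2⟩
    have hb : 0 < Nat.fib b := Nat.fib_pos.2 (by omega)
    have hd : d = c + 1 := by
      by_contra hne
      have h3 : Nat.fib (c + 2) ≤ Nat.fib d := Nat.fib_mono (by omega)
      have h4 : Nat.fib c ≤ Nat.fib (c + 1) := Nat.fib_mono (by omega)
      rw [Nat.fib_add_two] at h3
      omega
    subst hd
    obtain ⟨k, rfl⟩ : ∃ k, c = k + 2 := ⟨c - 2, by omega⟩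
    have e1 : Nat.fib (k + 2) = Nat.fib k + Nat.fib (k + 1) := Nat.fib_add_two
    have e2 : Nat.fib (k + 2 + 1) = Nat.fib (k + 1) + Nat.fib (k + 2) := Nat.fib_add_two
    have hbk : Nat.fib b = Nat.fib k := by omega
    have hk : 0 < k := Nat.fib_pos.1 (hbk ▸ hb)
    have ha0 : Nat.fib a = 0 → a = 0 := Nat.fib_eq_zero.1
    rcases lt_trichotomy b k with h | rfl | h
    · by_cases hk2 : k = 2
      · obtain rfl : b = 1 := by omega
        subst hk2
        norm_num [Nat.fib_add_two] at h1
        omega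
      · have := fib_lt_fib_of_lt (by omega) h hk2
        omega
    · have h4 : Nat.fib b ≤ Nat.fib (b + 1) := Nat.fib_mono (by omega)
      by_cases hb1 : b = 1
      · have := ha0 (by omega)
        omega
      · have := fib_lt_fib_of_lt (m := b) (n := b + 1) (by omega) (by omega) (by omega)
        omega
    · by_cases hb2 : b = 2
      · obtain rfl : k = 1 := by omega
        subst hb2
        norm_num [Nat.fib_add_two] at h1
        omega
      · have := fib_lt_fib_of_lt hk h hb2
        omega
  · rintro (⟨rfl, rfl, rfl, rfl⟩ | ⟨rfl, rfl, rfl, rfl⟩) <;> decide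
end

section
/- Let R be a nonzero rational, γ an integer, and define f : ℤ → ℚ by f(n) = R·(n − γ)·2^n. Then for every integer s > γ, setting m = −2^{s−γ} + s, n = −2^{s−γ} + s − 1 and k = −2^{s−γ} + γ, one has f(m) + f(k) = 2·f(n); moreover if s > γ + 1 then m, n, k are pairwise distinct. Hence f contains infinitely many three-term arithmetic progressions. -/
/-!
Put `d = s - γ` and `N = 2 ^ d`. Then `f m - 2 f n = R * 2 ^ (γ + d - N) = R * N * 2 ^ (γ - N) = -f k`,
which is the progression identity. The triples for different `s` are different because
`m - k = s - γ`, so there are infinitely many of them.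
-/

/-- For `f n = R * (n - γ) * 2^n` (`R ∈ ℚ*`, `γ ∈ ℤ`): for every `s > γ`, with
`m = -2^(s-γ) + s`, `n = -2^(s-γ) + s - 1`, `k = -2^(s-γ) + γ` one has
`f m + f k = 2 * f n`, and `m, n, k` are pairwise distinct whenever `s > γ + 1`.
Hence `f` contains infinitely many three-term arithmetic progressions. -/
theorem exceptional_sequence_ap_pos (R : ℚ) (hR : R ≠ 0) (γ : ℤ) (f : ℤ → ℚ)
    (hf : ∀ n : ℤ, f n = R * ((n : ℚ) - (γ : ℚ)) * (2 : ℚ) ^ n) :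
    (∀ s : ℤ, γ < s →
      f (-(2 : ℤ) ^ (s - γ).toNat + s) + f (-(2 : ℤ) ^ (s - γ).toNat + γ) =
        2 * f (-(2 : ℤ) ^ (s - γ).toNat + s - 1) ∧
      (γ + 1 < s →
        (-(2 : ℤ) ^ (s - γ).toNat + s ≠ -(2 : ℤ) ^ (s - γ).toNat + s - 1 ∧
         -(2 : ℤ) ^ (s - γ).toNat + s ≠ -(2 : ℤ) ^ (s - γ).toNat + γ ∧
         -(2 : ℤ) ^ (s - γ).toNat + s - 1 ≠ -(2 : ℤ) ^ (s - γ).toNat + γ))) ∧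
    {x : ℤ × ℤ × ℤ | x.1 ≠ x.2.1 ∧ x.1 ≠ x.2.2 ∧ x.2.1 ≠ x.2.2 ∧
      f x.1 + f x.2.2 = 2 * f x.2.1}.Infinite := by
  have key : ∀ s : ℤ, γ < s →
      f (-(2 : ℤ) ^ (s - γ).toNat + s) + f (-(2 : ℤ) ^ (s - γ).toNat + γ) =
        2 * f (-(2 : ℤ) ^ (s - γ).toNat + s - 1) := by
    intro s hs
    obtain ⟨d, rfl⟩ : ∃ d : ℕ, s = γ + d := ⟨(s - γ).toNat, by omega⟩
    have hd : (γ + (d : ℤ) - γ).toNat = d := by omega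
    rw [hd, hf, hf, hf]
    have h2 : (2 : ℚ) ≠ 0 := two_ne_zero
    -- Express all three powers through `2 ^ (γ - N)`, where `N = 2 ^ d`.
    have e1 : (2 : ℚ) ^ (-(2 : ℤ) ^ d + (γ + (d : ℤ))) =
        (2 : ℚ) ^ (-(2 : ℤ) ^ d + γ) * 2 ^ d := by
      rw [← add_assoc, zpow_add₀ h2, zpow_natCast]
    have e2 : (2 : ℚ) ^ (-(2 : ℤ) ^ d + (γ + (d : ℤ)) - 1) =
        (2 : ℚ) ^ (-(2 : ℤ) ^ d + γ) * 2 ^ d / 2 := by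
      rw [zpow_sub_one₀ h2, e1, div_eq_mul_inv]
    rw [e1, e2]
    push_cast
    ring
  refine ⟨fun s hs => ⟨key s hs, fun hs' => ⟨by omega, by omega, by omega⟩⟩, ?_⟩
  refine Set.infinite_of_injective_forall_mem (f := fun t : ℕ =>
    ((-(2 : ℤ) ^ (γ + 2 + t - γ).toNat + (γ + 2 + t),
      -(2 : ℤ) ^ (γ + 2 + t - γ).toNat + (γ + 2 + t) - 1,
      -(2 : ℤ) ^ (γ + 2 + t - γ).toNat + γ) : ℤ × ℤ × ℤ)) ?_ ?_
  · intro a b hab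
    simp only [Prod.mk.injEq] at hab
    obtain ⟨h1, -, h3⟩ := hab
    -- Subtracting the third components from the first ones cancels the powers of two.
    have h4 := congrArg₂ (· - ·) h1 h3
    simp only [add_sub_add_left_eq_sub] at h4
    omega
  · intro t
    refine ⟨?_, ?_, ?_, key (γ + 2 + t) (by omega)⟩ <;> dsimp only <;> omega
end

section
/- Let R be a nonzero rational, γ an integer, and define f : ℤ → ℚ by f(n) = R·(n − γ)·2^{−n}. Then for every integer s > −γ, setting m = 2^{s+γ} − s, n = 2^{s+γ} − s + 1 and k = 2^{s+γ} + γ, one has f(m) + f(k) = 2·f(n); moreover if s > 1 − γ then m, n, k are pairwise distinct. Hence f contains infinitely many three-term arithmetic progressions. -/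
/-!
Put `t = s + γ` and `N = 2 ^ t`. Then `m - γ = N - t`, `n - γ = N - t + 1`, `k - γ = N`, and
`2 * 2 ^ (-n) = 2 ^ (-m)`, so `2 * f n - f m = R * 2 ^ (-m) = R * 2 ^ (t - N - γ)`, which equals
`f k = R * N * 2 ^ (-N - γ)`. The indices are distinct once `t > 1`, and since `k = 2 ^ t + γ` is
injective in `t`, the progressions obtained for `t ≥ 2` are infinitely many.
-/

/-- For `f n = R * (n - γ) * 2^(-n)` (`R ∈ ℚ*`, `γ ∈ ℤ`): for every `s > -γ`, with
`m = 2^(s+γ) - s`, `n = 2^(s+γ) - s + 1`, `k = 2^(s+γ) + γ` one has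
`f m + f k = 2 * f n`, and `m, n, k` are pairwise distinct whenever `s > 1 - γ`.
Hence `f` contains infinitely many three-term arithmetic progressions. -/
theorem exceptional_sequence_ap_neg (R : ℚ) (hR : R ≠ 0) (γ : ℤ) (f : ℤ → ℚ)
    (hf : ∀ n : ℤ, f n = R * ((n : ℚ) - (γ : ℚ)) * (2 : ℚ) ^ (-n)) :
    (∀ s : ℤ, -γ < s →
      f ((2 : ℤ) ^ (s + γ).toNat - s) + f ((2 : ℤ) ^ (s + γ).toNat + γ) =
        2 * f ((2 : ℤ) ^ (s + γ).toNat - s + 1) ∧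
      (1 - γ < s →
        ((2 : ℤ) ^ (s + γ).toNat - s ≠ (2 : ℤ) ^ (s + γ).toNat - s + 1 ∧
         (2 : ℤ) ^ (s + γ).toNat - s ≠ (2 : ℤ) ^ (s + γ).toNat + γ ∧
         (2 : ℤ) ^ (s + γ).toNat - s + 1 ≠ (2 : ℤ) ^ (s + γ).toNat + γ))) ∧
    {x : ℤ × ℤ × ℤ | x.1 ≠ x.2.1 ∧ x.1 ≠ x.2.2 ∧ x.2.1 ≠ x.2.2 ∧
      f x.1 + f x.2.2 = 2 * f x.2.1}.Infinite := by
  have key : ∀ s : ℤ, -γ < s →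
      f ((2 : ℤ) ^ (s + γ).toNat - s) + f ((2 : ℤ) ^ (s + γ).toNat + γ) =
        2 * f ((2 : ℤ) ^ (s + γ).toNat - s + 1) := by
    intro s hs
    obtain ⟨t, ht⟩ := Int.eq_ofNat_of_zero_le (show 0 ≤ s + γ by omega)
    obtain rfl : s = t - γ := by omega
    have h2 : (2 : ℚ) ≠ 0 := two_ne_zero
    rw [hf, hf, hf, ht, Int.toNat_natCast]
    generalize hN : (2 : ℤ) ^ t = N
    have hNq : (N : ℚ) = 2 ^ t := by rw [← hN]; push_cast; rfl
    -- All three powers of two are multiples of `2 ^ (-(N + γ))`.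
    have e1 : (2 : ℚ) ^ (-(N - (t - γ))) = 2 ^ (-(N + γ)) * N := by
      rw [hNq, ← zpow_natCast, ← zpow_add₀ h2]
      congr 1
      ring
    have e2 : (2 : ℚ) ^ (-(N - (t - γ) + 1)) = 2 ^ (-(N + γ)) * N / 2 := by
      rw [← e1, neg_add, zpow_add₀ h2, zpow_neg_one]
      rfl
    rw [e1, e2]
    push_cast
    ring
  refine ⟨fun s hs => ⟨key s hs, fun h => ⟨by omega, by omega, by omega⟩⟩, ?_⟩
  -- The parameter `j : ℕ` corresponds to `s = j + 2 - γ`, that is, to exponent `t = j + 2`.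
  refine Set.infinite_of_injective_forall_mem
    (f := fun j : ℕ => ((2 : ℤ) ^ (j + 2) - (j + 2 - γ), (2 : ℤ) ^ (j + 2) - (j + 2 - γ) + 1,
      (2 : ℤ) ^ (j + 2) + γ)) ?_ ?_
  · intro i j hij
    simp only [Prod.mk.injEq] at hij
    have h := Int.pow_right_injective (a := 2) (by norm_num) (add_right_cancel hij.2.2)
    omega
  · intro j
    have h := key (j + 2 - γ) (by omega)
    rw [show ((j : ℤ) + 2 - γ + γ).toNat = j + 2 by omega] at h
    exact ⟨by dsimp only; omega, by dsimp only; omega, by dsimp only; omega, h⟩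
end

section
/- Let f : ℤ → ℤ satisfy f(n+2) = 4·f(n+1) + f(n) for all n ∈ ℤ, with f(0) = −3 and f(1) = 1. Then for every integer t, f(2t+2) + f(2t+1) = 2·f(−2t+1); hence this binary recurrence defined over the integers contains infinitely many three-term arithmetic progressions (f(2t+2), f(−2t+1), f(2t+1)). -/
/-!
The sequences `n ↦ f (n+1) + f n` and `n ↦ (-1)^(n+1) * 2 * f (2-n)` satisfy the same recurrence,
because replacing `n` by `-n` and twisting by `(-1)^n` preserves `u (n+2) = 4 u (n+1) + u n`.
They agree at `n = 1` and `n = 2`, hence everywhere; odd `n = 2t+1` gives the theorem.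
The proof runs this as a two-sided induction on `t`, carrying the identities for
`n = 2t+1` and `n = 2t+2` together.
-/

/-- The integer binary recurrence `f (n+2) = 4 f (n+1) + f n` with `f 0 = -3`,
`f 1 = 1` satisfies `f (2t+2) + f (2t+1) = 2 * f (-2t+1)` for every integer `t`;
hence it contains infinitely many three-term arithmetic progressions
`(f (2t+2), f (-2t+1), f (2t+1))`. -/
theorem symmetric_example_three_term_ap (f : ℤ → ℤ)
    (hrec : ∀ n : ℤ, f (n + 2) = 4 * f (n + 1) + f n)
    (h0 : f 0 = -3) (h1 : f 1 = 1) :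
    ∀ t : ℤ, f (2 * t + 2) + f (2 * t + 1) = 2 * f (-2 * t + 1) := by
  intro t
  have key : f (2 * t + 2) + f (2 * t + 1) = 2 * f (-2 * t + 1) ∧
      f (2 * t + 3) + f (2 * t + 2) = -2 * f (-2 * t) := by
    induction t using Int.induction_on with
    | zero =>
      have a := hrec 0
      have b := hrec 1
      norm_num at a b ⊢
      constructor <;> linarith
    | succ i ih =>
      obtain ⟨ih1, ih2⟩ := ih
      have a := hrec (2 * i + 1)
      have b := hrec (2 * i + 2)
      have c := hrec (2 * i + 3)
      have d := hrec (-2 * i - 1)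
      have e := hrec (-2 * i - 2)
      ring_nf at *
      constructor <;> linarith
    | pred i ih =>
      obtain ⟨ih1, ih2⟩ := ih
      have a := hrec (-2 * i + 1)
      have b := hrec (-2 * i)
      have c := hrec (-2 * i - 1)
      have d := hrec (2 * i)
      have e := hrec (2 * i + 1)
      ring_nf at *
      constructor <;> linarith
  exact key.1
end

section
/- Let α = 2 + √5 or α = 2 − √5, and let a, b, c be integers with a = b + 1 and b + c even. Define C = 1 + ((−1)^a·α^{−(a+c)} + (−1)^b·α^{−(b+c)})/2 and f : ℤ → ℝ by f(n) = C·(α^n + (−1)^{n+c}·α^{b+c−n}·(1+α)/2). Then for every integer t, f(2t+a) + f(2t+b) = 2·f(−2t+c); that is, (f(2t+a), f(−2t+c), f(2t+b)) is a three-term arithmetic progression for every t ∈ ℤ. -/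
/-!
The constant `C` plays no role: the identity already holds for `f / C`. Since `b + c` is even and
`a = b + 1`, the signs `(-1)^(n+c)` at `n = 2t+a, 2t+b, -2t+c` are `-1, 1, 1`. With
`P = α^(2t+b)` and `Q = α^(c-2t-1)`, the left side becomes `P (1+α) + Q (α-1)(1+α)/2` and the right
side `2 α Q + P (1+α)`; these agree because `α² - 1 = 4α`.
-/

/-- For `α = 2 ± √5`, integers `a = b + 1` and `b + c` even, the sequence
`f n = C * (α^n + (-1)^(n+c) * α^(b+c-n) * (1+α)/2)` with
`C = 1 + ((-1)^a * α^(-(a+c)) + (-1)^b * α^(-(b+c)))/2` satisfies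
`f (2t+a) + f (2t+b) = 2 * f (-2t+c)` for every integer `t`. -/
theorem symmetric_family_three_term_ap (α : ℝ)
    (hα : α = 2 + Real.sqrt 5 ∨ α = 2 - Real.sqrt 5)
    (a b c : ℤ) (hab : a = b + 1) (hbc : Even (b + c))
    (C : ℝ)
    (hC : C = 1 + ((-1 : ℝ) ^ a * α ^ (-(a + c)) + (-1 : ℝ) ^ b * α ^ (-(b + c))) / 2)
    (f : ℤ → ℝ)
    (hf : ∀ n : ℤ, f n = C * (α ^ n + (-1 : ℝ) ^ (n + c) * α ^ (b + c - n) * (1 + α) / 2)) :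
    ∀ t : ℤ, f (2 * t + a) + f (2 * t + b) = 2 * f (-2 * t + c) := by
  have hquad : α ^ 2 = 4 * α + 1 := by
    have h5 : Real.sqrt 5 ^ 2 = 5 := Real.sq_sqrt (by norm_num)
    rcases hα with h | h <;> rw [h] <;> linear_combination h5
  have hα0 : α ≠ 0 := by
    rintro rfl
    norm_num at hquad
  intro t
  have sign_a : (-1 : ℝ) ^ (2 * t + a + c) = -1 := by
    apply Odd.neg_one_zpow
    obtain ⟨k, hk⟩ := hbc
    exact ⟨t + k, by omega⟩
  have sign_b : (-1 : ℝ) ^ (2 * t + b + c) = 1 := by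
    apply Even.neg_one_zpow
    obtain ⟨k, hk⟩ := hbc
    exact ⟨t + k, by omega⟩
  have sign_c : (-1 : ℝ) ^ (-2 * t + c + c) = 1 :=
    Even.neg_one_zpow ⟨-t + c, by ring⟩
  rw [hf, hf, hf, sign_a, sign_b, sign_c]
  have e1 : α ^ (2 * t + a) = α ^ (2 * t + b) * α := by
    rw [← zpow_add_one₀ hα0]; congr 1; omega
  have e2 : α ^ (b + c - (2 * t + a)) = α ^ (c - 2 * t - 1) := by
    congr 1; omega
  have e3 : α ^ (b + c - (2 * t + b)) = α ^ (c - 2 * t - 1) * α := by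
    rw [← zpow_add_one₀ hα0]; congr 1; omega
  have e4 : α ^ (-2 * t + c) = α ^ (c - 2 * t - 1) * α := by
    rw [← zpow_add_one₀ hα0]; congr 1; omega
  have e5 : α ^ (b + c - (-2 * t + c)) = α ^ (2 * t + b) := by
    congr 1; omega
  rw [e1, e2, e3, e4, e5]
  linear_combination C * α ^ (c - 2 * t - 1) / 2 * hquad
end

section
/- Let a_0, a_1 be rationals with a_0 ≠ 0 and set P(X) = X² − a_1X − a_0. Suppose f : ℤ → ℤ satisfies f(n+2) = a_1·f(n+1) + a_0·f(n) for all n ∈ ℤ and f satisfies no linear recurrence of order smaller than 2 with constant complex coefficients. Assume that the quotient of the two complex roots of P is not a root of unity and that no complex root of P is a root of unity. If the set of triples (m,n,k) of pairwise distinct positive integers with f(n) ≠ 0 and f(m) + f(k) = 2·f(n) is infinite, then P(X) = X² + X − 1 or P(X) = X² − X − 1. -/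
open Polynomial

/-!
Since `f` is integer valued on all of `ℤ`, the recurrence runs through integers in both directions,
and this forces `a₁ ∈ ℤ` and `a₀ = ±1`. Indeed `D n = f n * f (n + 2) - f (n + 1) ^ 2` never
vanishes (minimality of the order) and satisfies `D (n + 1) = -a₀ * D n`, so the numerator and the
denominator of `a₀` divide `D 0` to every power; then the denominator of `a₁` divides every `f n`
to every power (`pow_dvd_all`, `natAbs_eq_one_of_pow_dvd`).

If no root of `P` is a root of unity and `P ≠ X ^ 2 ± X - 1`, then `|a₁| ≥ 3`, or `|a₁| = 2` and
`a₀ = 1`. In these cases `|f (n + 2)| ≥ 2 * |f (n + 1)| + |f n| > 0` eventually (`growth`). For a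
progression whose largest index is large this leaves only equality, which means three consecutive
indices with the middle term of the progression at the middle index. The recurrence then gives
`(a₁ - 2) * f (n + 1) + (a₀ + 1) * f n = 0`, impossible by the same growth
(`no_large_progression`). Hence the indices of the progressions are bounded.
-/

/-! ### Uniqueness of solutions -/

lemma recurrence_eq_zero {a₀ a₁ : ℚ} (ha₀ : a₀ ≠ 0) (g : ℤ → ℚ)
    (hrec : ∀ n, g (n + 2) = a₁ * g (n + 1) + a₀ * g n) (c : ℤ) (h0 : g c = 0)
    (h1 : g (c + 1) = 0) (n : ℤ) : g n = 0 := by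
  have key : ∀ n : ℤ, g n = 0 ∧ g (n + 1) = 0 := by
    intro n
    induction n using Int.inductionOn' (b := c) with
    | zero => exact ⟨h0, h1⟩
    | succ k _ ih =>
      refine ⟨ih.2, ?_⟩
      rw [show k + 1 + 1 = k + 2 by ring, hrec, ih.1, ih.2]
      simp
    | pred k _ ih =>
      have h := hrec (k - 1)
      rw [show k - 1 + 2 = k + 1 by ring, show k - 1 + 1 = k by ring, ih.1, ih.2] at h
      have h' : g (k - 1) = 0 := by simpa [ha₀] using h
      exact ⟨h', by simpa using ih.1⟩
  exact (key n).1

/-! ### Integrality of the coefficients -/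

lemma natAbs_eq_one_of_pow_dvd {q x : ℤ} (hx : x ≠ 0) (h : ∀ k : ℕ, q ^ k ∣ x) :
    q.natAbs = 1 := by
  by_contra hq
  have hfin : FiniteMultiplicity q x := Int.finiteMultiplicity_iff.2 ⟨hq, hx⟩
  obtain ⟨k, hk⟩ := hfin
  exact hk (h _)

/-- If the sequence `h` satisfies `p * h (n + c) = q * u n`, where `u` inherits every common
divisor of the values of `h`, and `p`, `q` are coprime, then all powers of `q` divide all values
of `h`. -/
lemma pow_dvd_all {p q : ℤ} (hpq : IsCoprime q p) (h u : ℤ → ℤ) (c : ℤ)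
    (hu : ∀ d : ℤ, (∀ n, d ∣ h n) → ∀ n, d ∣ u n)
    (heq : ∀ n, p * h (n + c) = q * u n) (k : ℕ) : ∀ n, q ^ k ∣ h n := by
  induction k with
  | zero => intro n; simp
  | succ k ih =>
    intro n
    have h1 : q ^ (k + 1) ∣ p * h n := by
      have := heq (n - c)
      rw [sub_add_cancel] at this
      rw [this, pow_succ']
      exact mul_dvd_mul_left q (hu _ ih _)
    exact (hpq.pow_left).dvd_of_dvd_mul_left h1

lemma rat_isCoprime (a : ℚ) : IsCoprime (a.den : ℤ) a.num := by
  rw [Int.isCoprime_iff_nat_coprime]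
  simpa using a.reduced.symm

/-- The coefficients of a minimal binary recurrence with integer values on all of `ℤ` are an
integer `a₁` and a unit `a₀ = ±1`. -/
lemma integrality {a₀ a₁ : ℚ} (f : ℤ → ℤ)
    (hrec : ∀ n : ℤ, (f (n + 2) : ℚ) = a₁ * (f (n + 1) : ℚ) + a₀ * (f n : ℚ))
    (hD : ∀ n : ℤ, f n * f (n + 2) - f (n + 1) ^ 2 ≠ 0) :
    ∃ a b : ℤ, a₁ = a ∧ a₀ = b ∧ (b = 1 ∨ b = -1) := by
  set D : ℤ → ℤ := fun n => f n * f (n + 2) - f (n + 1) ^ 2 with hDdef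
  have hDrec : ∀ n, (D (n + 1) : ℚ) = -a₀ * D n := by
    intro n
    have e1 := hrec n
    have e2 := hrec (n + 1)
    rw [show n + 1 + 1 = n + 2 by ring] at e2
    simp only [hDdef]
    push_cast
    rw [show n + 1 + 1 = n + 2 by ring, e2, e1]
    ring
  have hZ : ∀ n, (a₀.den : ℤ) * D (n + 1) = -a₀.num * D n := by
    intro n
    have hd : (a₀.den : ℚ) ≠ 0 := by exact_mod_cast a₀.den_ne_zero
    have h := hDrec n
    have ha : a₀ = a₀.num / a₀.den := (Rat.num_div_den a₀).symm
    rw [ha] at h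
    field_simp at h
    have h' : (a₀.den : ℚ) * D (n + 1) = -a₀.num * D n := by linear_combination h
    exact_mod_cast h'
  have hcop := rat_isCoprime a₀
  have hden : a₀.den = 1 := by
    simpa using natAbs_eq_one_of_pow_dvd (hD 0) fun k =>
      pow_dvd_all (hcop.neg_right) D (fun n => D (n + 1)) 0
        (fun d hd n => hd _) (fun n => by rw [add_zero]; exact (hZ n).symm) k 0
  have hnum : a₀.num.natAbs = 1 := by
    simpa using natAbs_eq_one_of_pow_dvd (hD 0) fun k =>
      pow_dvd_all (hcop.symm) D (fun n => -D n) 1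
        (fun d hd n => (hd n).neg_right) (fun n => by rw [hZ n]; ring) k 0
  have hb : a₀ = (a₀.num : ℚ) := by
    conv_lhs => rw [← Rat.num_div_den a₀]
    simp [hden]
  have hf : ∃ n, f n ≠ 0 := by
    by_contra! hf
    exact hD 0 (by simp [hf])
  obtain ⟨n₀, hn₀⟩ := hf
  have hZ1 : ∀ n, a₁.num * f (n + 1) = (a₁.den : ℤ) * (f (n + 2) - a₀.num * f n) := by
    intro n
    have hd : (a₁.den : ℚ) ≠ 0 := by exact_mod_cast a₁.den_ne_zero
    have h := hrec n
    rw [hb, ← Rat.num_div_den a₁] at h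
    have h' : (a₁.num : ℚ) * f (n + 1) = (a₁.den : ℚ) * (f (n + 2) - a₀.num * f n) := by
      rw [h]; field_simp; ring
    exact_mod_cast h'
  have hden1 : a₁.den = 1 := by
    simpa using natAbs_eq_one_of_pow_dvd hn₀ fun k =>
      pow_dvd_all (rat_isCoprime a₁) f (fun n => f (n + 2) - a₀.num * f n) 1
        (fun d hd n => dvd_sub (hd _) ((hd _).mul_left _)) hZ1 k n₀
  refine ⟨a₁.num, a₀.num, ?_, hb, Int.natAbs_eq_natAbs_iff.1 (by simpa using hnum)⟩
  conv_lhs => rw [← Rat.num_div_den a₁]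
  simp [hden1]

/-! ### Growth -/

/-- An integer sequence cannot have negative values and increase strictly forever. -/
lemma exists_nonneg_of_increasing (p : ℤ → ℤ) (h : ∀ n, p n < 0 → p n < p (n + 1)) :
    ∃ n, 0 ≤ p n := by
  by_contra! hneg
  have : ∀ k : ℕ, p 0 + k ≤ p k := by
    intro k
    induction k with
    | zero => simp
    | succ k ih =>
      have := h k (hneg k)
      push_cast
      linarith
  have h1 := this (p 0).natAbs
  have h2 := hneg ((p 0).natAbs : ℤ)
  have h3 := hneg 0
  omega

lemma growth {a b : ℤ} (f : ℤ → ℤ) (hrec : ∀ n, f (n + 2) = a * f (n + 1) + b * f n)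
    (hf : ∀ n, f n = 0 → f (n + 1) ≠ 0) (hb : b = 1 ∨ b = -1)
    (ha : 3 ≤ |a| ∨ (|a| = 2 ∧ b = 1)) :
    ∃ N : ℤ, ∀ n, N ≤ n → 0 < |f n| ∧ 2 * |f (n + 1)| + |f n| ≤ |f (n + 2)| := by
  rcases ha with ha | ⟨ha, rfl⟩
  · have hlow : ∀ n, 3 * |f (n + 1)| - |f n| ≤ |f (n + 2)| := by
      intro n
      have h1 : |a * f (n + 1)| ≤ |f (n + 2)| + |b * f n| := by
        have : a * f (n + 1) = f (n + 2) - b * f n := by rw [hrec]; ring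
        rw [this]; exact abs_sub _ _
      have hb' : |b| = 1 := by rcases hb with rfl | rfl <;> simp
      rw [abs_mul, abs_mul, hb'] at h1
      nlinarith [abs_nonneg (f (n + 1))]
    -- `|f|` cannot decrease forever.
    obtain ⟨N, hN⟩ : ∃ N, 0 ≤ |f (N + 1)| - |f N| := by
      by_contra! hneg
      obtain ⟨n, hn⟩ := exists_nonneg_of_increasing (fun n => -|f n| - 1)
        (fun n _ => by have := hneg n; linarith)
      have := abs_nonneg (f n)
      linarith
    have hstep : ∀ n, N + 1 ≤ n → 0 < |f n| ∧ 2 * |f n| ≤ |f (n + 1)| := by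
      intro n hn
      induction n, hn using Int.leInduction with
      | base =>
        have hpos : 0 < |f (N + 1)| := by
          rcases eq_or_ne (f N) 0 with h | h
          · exact abs_pos.2 (hf N h)
          · have := abs_pos.2 h
            linarith
        have := hlow N
        rw [show N + 1 + 1 = N + 2 by ring]
        exact ⟨hpos, by linarith⟩
      | succ n hn ih =>
        have := hlow n
        rw [show n + 1 + 1 = n + 2 by ring]
        exact ⟨by linarith, by linarith⟩
    refine ⟨N + 1, fun n hn => ⟨(hstep n hn).1, ?_⟩⟩
    linarith [hlow n, hstep n hn]
  · have haa : a * a = 4 := by rw [← abs_mul_abs_self, ha]; norm_num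
    -- `a * f n * f (n + 1)` grows by `4 * f (n + 1) ^ 2`, hence is eventually nonnegative.
    have hp : ∀ n, a * f (n + 1) * f (n + 2) = a * f n * f (n + 1) + 4 * f (n + 1) ^ 2 := by
      intro n
      rw [hrec, ← haa]; ring
    obtain ⟨N, hN⟩ := exists_nonneg_of_increasing (fun n => a * f n * f (n + 1)) (by
      intro n hn
      rw [show n + 1 + 1 = n + 2 by ring, hp]
      have : f (n + 1) ≠ 0 := by rintro h; simp [h] at hn
      have : 0 < f (n + 1) ^ 2 := by positivity
      linarith)
    have hnn : ∀ n, N ≤ n → 0 ≤ a * f n * f (n + 1) := by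
      intro n hn
      induction n, hn using Int.leInduction with
      | base => exact hN
      | succ n hn ih =>
        rw [show n + 1 + 1 = n + 2 by ring, hp]
        positivity
    have hgrow : ∀ n, N ≤ n → |f (n + 2)| = 2 * |f (n + 1)| + |f n| := by
      intro n hn
      rw [hrec, one_mul, ← ha, ← abs_mul]
      have h := hnn n hn
      have h' : 0 ≤ (a * f (n + 1)) * f n := by linarith [h]
      rw [abs_add_eq_add_abs_iff]
      rcases mul_nonneg_iff.1 h' with h | h
      · exact Or.inl h
      · exact Or.inr h
    refine ⟨N + 2, fun n hn => ⟨?_, (hgrow n (by omega)).ge⟩⟩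
    have h := hgrow (n - 2) (by omega)
    rw [show n - 2 + 2 = n by ring, show n - 2 + 1 = n - 1 by ring] at h
    have h1 := abs_nonneg (f (n - 1))
    have h2 := abs_nonneg (f (n - 2))
    rcases eq_or_ne (f (n - 2)) 0 with h0 | h0
    · have h3 := hf (n - 2) h0
      rw [show n - 2 + 1 = n - 1 by ring] at h3
      have := abs_pos.2 h3
      linarith
    · have := abs_pos.2 h0
      linarith

/-! ### Large indices -/

/-- Beyond some index, every `|f n|` exceeds all `|f j|` with `0 < j < n`, including those `j`
where the growth has not set in yet. -/
lemma dominates (f : ℤ → ℤ) (N : ℤ)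
    (hN : ∀ n, N ≤ n → 0 < |f n| ∧ 2 * |f (n + 1)| + |f n| ≤ |f (n + 2)|) :
    ∃ M : ℤ, N ≤ M ∧ ∀ n, M ≤ n → ∀ j, 0 < j → j < n → |f j| < |f n| := by
  have hmono : ∀ n, N + 1 ≤ n → |f n| + 1 ≤ |f (n + 1)| := by
    intro n hn
    have h := hN (n - 1) (by omega)
    have h' := hN n (by omega)
    rw [show n - 1 + 1 = n by ring, show n - 1 + 2 = n + 1 by ring] at h
    linarith
  have hlt : ∀ j, N + 1 ≤ j → ∀ n, j ≤ n → |f j| + (n - j) ≤ |f n| := by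
    intro j hj n hn
    induction n, hn using Int.leInduction with
    | base => simp
    | succ n hn ih =>
      have := hmono n (by omega)
      linarith
  set C : ℤ := ∑ j ∈ Finset.Icc 0 (N + 1), |f j| with hC
  have hC0 : 0 ≤ C := Finset.sum_nonneg fun _ _ => abs_nonneg _
  refine ⟨N + 2 + C, by omega, fun n hn j hj hjn => ?_⟩
  rcases le_or_gt (N + 1) j with h | h
  · have := hlt j h n hjn.le
    linarith
  · have h1 : |f j| ≤ C := Finset.single_le_sum (f := fun j => |f j|)
      (fun _ _ => abs_nonneg _) (Finset.mem_Icc.2 ⟨hj.le, h.le⟩)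
    have h2 := hlt (N + 1) le_rfl n (by omega)
    have := abs_nonneg (f (N + 1))
    linarith

/-- No three-term progression has an outer index that is both large and the largest. -/
lemma no_large_outer {a b : ℤ} (f : ℤ → ℤ) (hrec : ∀ n, f (n + 2) = a * f (n + 1) + b * f n)
    (hb : b = 1 ∨ b = -1) (ha : a = 2 → b = 1) (N M : ℤ) (hNM : N ≤ M)
    (hN : ∀ n, N ≤ n → 0 < |f n| ∧ 2 * |f (n + 1)| + |f n| ≤ |f (n + 2)|)
    (hM : ∀ n, M ≤ n → ∀ j, 0 < j → j < n → |f j| < |f n|)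
    {m n k : ℤ} (hm : M + 3 ≤ m) (hn : 0 < n) (hk : 0 < k) (hnm : n < m) (hkm : k < m)
    (hnk : n ≠ k) (h : f m + f k = 2 * f n) : False := by
  have hle : |f m| ≤ 2 * |f n| + |f k| := by
    have : f m = 2 * f n - f k := by linarith
    rw [this]
    refine (abs_sub _ _).trans ?_
    rw [abs_mul]; simp
  obtain ⟨r, rfl⟩ : ∃ r, m = r + 2 := ⟨m - 2, by ring⟩
  have hg := (hN r (by omega)).2
  have hrpos := (hN r (by omega)).1
  have hle2 : ∀ j, 0 < j → j ≤ r → |f j| ≤ |f r| := by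
    intro j hj hjr
    rcases hjr.eq_or_lt with rfl | h'
    · exact le_rfl
    · exact (hM r (by omega) j hj h').le
  have hle1 : ∀ j, 0 < j → j ≤ r + 1 → |f j| ≤ |f (r + 1)| := by
    intro j hj hjr
    rcases hjr.eq_or_lt with rfl | h'
    · exact le_rfl
    · exact (hM (r + 1) (by omega) j hj h').le
  rcases (show n ≤ r + 1 by omega).eq_or_lt with rfl | h1
  · rcases (show k ≤ r by omega).eq_or_lt with rfl | h2
    · -- The three indices are consecutive: the recurrence applies directly.
      rw [hrec] at h
      have h3 : (a - 2) * f (k + 1) = -((b + 1) * f k) := by linarith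
      rcases eq_or_ne a 2 with rfl | h2
      · rw [ha rfl] at h3
        have : f k = 0 := by linarith
        simp [this] at hrpos
      · have h4 := congrArg abs h3
        rw [abs_neg, abs_mul, abs_mul] at h4
        have h5 : 1 ≤ |a - 2| := Int.one_le_abs (sub_ne_zero.2 h2)
        have h6 : |b + 1| ≤ 2 := by rcases hb with rfl | rfl <;> norm_num
        have h7 := hN (k - 1) (by omega)
        rw [show k - 1 + 1 = k by ring, show k - 1 + 2 = k + 1 by ring] at h7
        have h8 : |a - 2| * |f (k + 1)| ≥ 1 * |f (k + 1)| := by gcongr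
        have h9 : |b + 1| * |f k| ≤ 2 * |f k| := by gcongr
        linarith
    · have := hM r (by omega) k hk h2
      linarith
  · have h3 := hle2 n hn (by omega)
    have h4 := hle1 k hk (by omega)
    have h5 := hM (r + 1) (by omega) r (by omega) (by omega)
    linarith

lemma no_large_progression {a b : ℤ} (f : ℤ → ℤ)
    (hrec : ∀ n, f (n + 2) = a * f (n + 1) + b * f n)
    (hf : ∀ n, f n = 0 → f (n + 1) ≠ 0) (hb : b = 1 ∨ b = -1)
    (ha : 3 ≤ |a| ∨ (|a| = 2 ∧ b = 1)) :
    ∃ L : ℤ, ∀ m n k : ℤ, 0 < m → 0 < n → 0 < k → m ≠ n → m ≠ k → n ≠ k →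
      f m + f k = 2 * f n → m < L ∧ n < L ∧ k < L := by
  obtain ⟨N, hN⟩ := growth f hrec hf hb ha
  obtain ⟨M, hNM, hM⟩ := dominates f N hN
  have ha2 : a = 2 → b = 1 := by
    rintro rfl
    rcases ha with h | h
    · norm_num at h
    · exact h.2
  refine ⟨M + 3, fun m n k hm hn hk hmn hmk hnk h => ?_⟩
  by_contra hlarge
  rcases lt_or_ge n (max m k) with h1 | h1
  · rcases lt_or_gt_of_ne hmk with h2 | h2
    · exact no_large_outer f hrec hb ha2 N M hNM hN hM (m := k) (n := n) (k := m)
        (by omega) hn hm (by omega) h2 hmn.symm (by linarith)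
    · exact no_large_outer f hrec hb ha2 N M hNM hN hM (m := m) (n := n) (k := k)
        (by omega) hn hk (by omega) h2 hnk h
  · have h2 := hM n (by omega) m hm (by omega)
    have h3 := hM n (by omega) k hk (by omega)
    have h4 : |2 * f n| ≤ |f m| + |f k| := by rw [← h]; exact abs_add_le _ _
    rw [abs_mul] at h4
    norm_num at h4
    linarith

/-! ### The criterion -/

/-- A non-degenerate, non-unitary binary recurrence defined over the integers
containing infinitely many three-term arithmetic progressions with positive
indices has companion polynomial `X² + X - 1` or `X² - X - 1`. -/
theorem binary_integer_recurrence_ap_criterion (a₀ a₁ : ℚ) (ha₀ : a₀ ≠ 0)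
    (P : ℚ[X]) (hP : P = X ^ 2 - C a₁ * X - C a₀)
    (f : ℤ → ℤ)
    (hrec : ∀ n : ℤ, (f (n + 2) : ℚ) = a₁ * (f (n + 1) : ℚ) + a₀ * (f n : ℚ))
    (hmin : ∀ e : ℕ, e < 2 → ¬∃ b : Fin e → ℂ,
      ∀ n : ℤ, (f (n + (e : ℤ)) : ℂ) = ∑ i : Fin e, b i * (f (n + ((i : ℕ) : ℤ)) : ℂ))
    (hnondeg : ∀ α β : ℂ, aeval α P = 0 → aeval β P = 0 → α ≠ β →
      ∀ l : ℕ, 0 < l → (α / β) ^ l ≠ 1)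
    (hnonunit : ∀ α : ℂ, aeval α P = 0 → ∀ l : ℕ, 0 < l → α ^ l ≠ 1)
    (hinf : {x : ℤ × ℤ × ℤ | 0 < x.1 ∧ 0 < x.2.1 ∧ 0 < x.2.2 ∧
      x.1 ≠ x.2.1 ∧ x.1 ≠ x.2.2 ∧ x.2.1 ≠ x.2.2 ∧
      f x.2.1 ≠ 0 ∧ f x.1 + f x.2.2 = 2 * f x.2.1}.Infinite) :
    P = X ^ 2 + X - 1 ∨ P = X ^ 2 - X - 1 := by
  -- Minimality: `f` has no two consecutive zeros, and its Hankel determinants do not vanish.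
  have hf : ∀ n, f n = 0 → f (n + 1) ≠ 0 := by
    intro n h0 h1
    refine hmin 0 (by norm_num) ⟨fun _ => 0, fun k => ?_⟩
    have := recurrence_eq_zero ha₀ (fun n => (f n : ℚ)) hrec n (by simp [h0]) (by simp [h1]) k
    have : f k = 0 := by exact_mod_cast this
    simp [this]
  have hD : ∀ n : ℤ, f n * f (n + 2) - f (n + 1) ^ 2 ≠ 0 := by
    intro n hn
    rcases eq_or_ne (f n) 0 with h0 | h0
    · have := hf n h0
      simp [h0, this] at hn
    · have h0' : (f n : ℚ) ≠ 0 := by exact_mod_cast h0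
      have hn' : (f n : ℚ) * f (n + 2) - f (n + 1) ^ 2 = 0 := by exact_mod_cast hn
      have key := recurrence_eq_zero (a₁ := a₁) ha₀
        (fun k => (f (k + 1) : ℚ) - f (n + 1) / f n * f k)
        (fun k => by
          have e := hrec (k + 1)
          rw [show k + 1 + 2 = k + 2 + 1 by ring] at e
          rw [e, hrec k, show k + 1 + 1 = k + 2 by ring, hrec k]
          ring) n (by field_simp; ring) (by
          rw [show n + 1 + 1 = n + 2 by ring]
          field_simp
          linarith)
      refine hmin 1 (by norm_num) ⟨fun _ => (((f (n + 1) : ℚ) / f n : ℚ) : ℂ), fun k => ?_⟩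
      have e : (f (k + 1) : ℚ) = f (n + 1) / f n * f k := by linarith [key k]
      have e' := congrArg (fun x : ℚ => (x : ℂ)) e
      push_cast at e'
      simpa using e'
  obtain ⟨a, b, rfl, rfl, hb⟩ := integrality f hrec hD
  have hrecZ : ∀ n, f (n + 2) = a * f (n + 1) + b * f n := fun n => by exact_mod_cast hrec n
  obtain ⟨x, hx⟩ : ∃ x : ℂ, aeval x P = 0 := by
    apply IsAlgClosed.exists_aeval_eq_zero
    have : P.degree = 2 := by rw [hP]; compute_degree!
    rw [this]; norm_num
  have hx' : x ^ 2 - a * x - b = 0 := by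
    rw [hP] at hx
    simpa using hx
  by_cases ha : 3 ≤ |a| ∨ (|a| = 2 ∧ b = 1)
  · exfalso
    obtain ⟨L, hL⟩ := no_large_progression f hrecZ hf hb ha
    refine hinf (((Set.finite_Icc 0 L).prod
      ((Set.finite_Icc 0 L).prod (Set.finite_Icc 0 L))).subset ?_)
    rintro ⟨m, n, k⟩ ⟨h1, h2, h3, h4, h5, h6, -, h7⟩
    obtain ⟨l1, l2, l3⟩ := hL m n k h1 h2 h3 h4 h5 h6 h7
    exact ⟨⟨h1.le, l1.le⟩, ⟨h2.le, l2.le⟩, ⟨h3.le, l3.le⟩⟩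
  · push Not at ha
    obtain ⟨h1, h2⟩ := ha
    have h3 := abs_lt.1 h1
    have hlow : -2 ≤ a := by omega
    have hhigh : a ≤ 2 := by omega
    rcases hb with rfl | rfl
    · interval_cases a
      · exact absurd rfl (h2 rfl)
      · left; rw [hP]; simp
      · exact absurd (by push_cast at hx'; linear_combination hx') (hnonunit x hx 2 (by norm_num))
      · right; rw [hP]; simp
      · exact absurd rfl (h2 rfl)
    · -- Here the roots are roots of unity of order dividing 12.
      exfalso
      refine hnonunit x hx 12 (by norm_num) ?_
      interval_cases a <;> push_cast at hx'
      · have : x = -1 := by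
          have : (x + 1) ^ 2 = 0 := by linear_combination hx'
          linear_combination pow_eq_zero_iff (two_ne_zero) |>.1 this
        rw [this]; norm_num
      · have : x ^ 3 = 1 := by linear_combination (x - 1) * hx'
        rw [show x ^ 12 = (x ^ 3) ^ 4 by ring, this]; norm_num
      · have : x ^ 2 = -1 := by linear_combination hx'
        rw [show x ^ 12 = (x ^ 2) ^ 6 by ring, this]; norm_num
      · have : x ^ 3 = -1 := by linear_combination (x + 1) * hx'
        rw [show x ^ 12 = (x ^ 3) ^ 4 by ring, this]; norm_num
      · have : x = 1 := by
          have : (x - 1) ^ 2 = 0 := by linear_combination hx'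
          linear_combination pow_eq_zero_iff (two_ne_zero) |>.1 this
        rw [this]; norm_num
end

section
/- If a is a rational number and x > y > 0 are integers with a^x − 2·a^y + 1 = 0, then a = 1 or a = −1. -/
/-!
This is the rational root theorem for `X ^ x - 2 * X ^ y + 1`: the polynomial is monic with integer
coefficients, so a rational root is an integer because `ℤ` is integrally closed, and the constant
term is `1`, so that integer divides `1`.
-/

/-- If `a` is rational and `x > y > 0` are integers with `a^x - 2a^y + 1 = 0`,
then `a = 1` or `a = -1`. -/
theorem rational_trinomial_root_pm_one (a : ℚ) (x y : ℕ) (hy : 0 < y) (hxy : y < x)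
    (h : a ^ x - 2 * a ^ y + 1 = 0) : a = 1 ∨ a = -1 := by
  have hint : IsIntegral ℤ a := by
    refine ⟨Polynomial.X ^ x + (Polynomial.C (-2) * Polynomial.X ^ y + Polynomial.C 1),
      Polynomial.monic_X_pow_add ?_, ?_⟩
    · have hdeg : (Polynomial.C (-2 : ℤ) * Polynomial.X ^ y + Polynomial.C 1).degree
          ≤ (y : WithBot ℕ) :=
        (Polynomial.degree_add_le _ _).trans (max_le (Polynomial.degree_C_mul_X_pow_le _ _)
          (Polynomial.degree_C_le.trans (by exact_mod_cast hy.le)))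
      exact hdeg.trans_lt (by exact_mod_cast hxy)
    · simp
      linarith
  obtain ⟨n, rfl⟩ := IsIntegrallyClosed.isIntegral_iff.mp hint
  simp only [eq_intCast] at h ⊢
  have hn : n ^ x - 2 * n ^ y + 1 = 0 := by exact_mod_cast h
  have hunit : IsUnit n := by
    rw [isUnit_iff_dvd_one]
    have h1 : (1 : ℤ) = 2 * n ^ y - n ^ x := by linarith
    rw [h1]
    exact dvd_sub (Dvd.dvd.mul_left (dvd_pow_self n hy.ne') 2)
      (dvd_pow_self n (hy.trans hxy).ne')
  rcases Int.isUnit_iff.mp hunit with rfl | rfl <;> simp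
end
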